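/- Let X be a real Banach space, b > 0, T : X → X a b-modified enriched nonexpansive mapping (i.e. ‖b(x−y) + Tx − Ty‖ ≤ ‖x−y‖ for all x, y ∈ X), and λ = 1/(b+1). Then the sequence defined by x_{n+1} = (1−λ)x_n + λT x_n coincides with the Picard iteration of the averaged mapping T_λ x = (1−λ)x + λTx, and T_λ has a unique fixed point to which the Picard iteration x_{n+1} = T_λ x_n converges for every initial point x₀ ∈ X. -/

import Mathlib

/-!
Since `1 - (b + 1)⁻¹ = (b + 1)⁻¹ * b`, averaging `T` with parameter `(b + 1)⁻¹` amounts to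
rescaling `x ↦ b • x + T x` by `(b + 1)⁻¹`. The enriched condition is a Lipschitz bound on the
latter map, so as soon as its constant is below `‖b + 1‖` the averaged map is a contraction and
Banach's fixed point theorem applies.
-/

open Filter Topology
open scoped NNReal

section Iteration

variable {α : Type*} {f : α → α} {x : ℕ → α}

theorem eq_iterate_of_succ_eq (hx : ∀ n, x (n + 1) = f (x n)) (n : ℕ) : x n = f^[n] (x 0) := by
  induction n with
  | zero => rfl
  | succ n ih => rw [hx, ih, Function.iterate_succ_apply']

theorem tendsto_fixedPoint_of_succ_eq [MetricSpace α] [CompleteSpace α] [Nonempty α] {K : ℝ≥0}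
    (hf : ContractingWith K f) (hx : ∀ n, x (n + 1) = f (x n)) :
    Tendsto x atTop (𝓝 (ContractingWith.fixedPoint f hf)) :=
  (hf.tendsto_iterate_fixedPoint (x 0)).congr fun n => (eq_iterate_of_succ_eq hx n).symm

end Iteration

/-- The averaged mapping `T_c = (1 - c) • id + c • T` of a self-map `T` of a module, whose Picard
iteration is the Krasnoselskii iteration of `T`. The parameter `c` is an arbitrary scalar, not
only a real number in `(0, 1)`. -/
def averagedMap {R M : Type*} [Ring R] [AddCommGroup M] [Module R M] (c : R) (T : M → M) (x : M) :
    M :=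
  (1 - c) • x + c • T x

theorem averagedMap_inv_add_one {R M : Type*} [DivisionRing R] [AddCommGroup M] [Module R M]
    {b : R} (hb : b + 1 ≠ 0) (T : M → M) (x : M) :
    averagedMap (b + 1)⁻¹ T x = (b + 1)⁻¹ • (b • x + T x) := by
  have hcoeff : 1 - (b + 1)⁻¹ = (b + 1)⁻¹ * b := by
    rw [sub_eq_iff_eq_add, ← mul_add_one, inv_mul_cancel₀ hb]
  rw [averagedMap, hcoeff, mul_smul, smul_add]

theorem lipschitzWith_smul_add_iff {R X : Type*} [SeminormedAddCommGroup X] [DistribSMul R X]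
    {b : R} {K : ℝ≥0} {T : X → X} :
    LipschitzWith K (fun x => b • x + T x) ↔
      ∀ x y, ‖b • (x - y) + (T x - T y)‖ ≤ K * ‖x - y‖ := by
  simp only [lipschitzWith_iff_norm_sub_le, add_sub_add_comm, smul_sub]

theorem lipschitzWith_averagedMap {𝕜 X : Type*} [NormedField 𝕜] [SeminormedAddCommGroup X]
    [NormedSpace 𝕜 X] {b : 𝕜} {K : ℝ≥0} {T : X → X} (hb : b + 1 ≠ 0)
    (hT : LipschitzWith K (fun x => b • x + T x)) :
    LipschitzWith (‖(b + 1)⁻¹‖₊ * K) (averagedMap (b + 1)⁻¹ T) := by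
  rw [funext (averagedMap_inv_add_one hb T)]
  exact (lipschitzWith_smul (b + 1)⁻¹).comp hT

theorem contractingWith_averagedMap {𝕜 X : Type*} [NormedField 𝕜] [NormedAddCommGroup X]
    [NormedSpace 𝕜 X] {b : 𝕜} {K : ℝ≥0} {T : X → X} (hK : K < ‖b + 1‖₊)
    (hT : LipschitzWith K (fun x => b • x + T x)) :
    ContractingWith (‖(b + 1)⁻¹‖₊ * K) (averagedMap (b + 1)⁻¹ T) := by
  have hnorm : 0 < ‖b + 1‖₊ := pos_of_gt hK
  refine ⟨?_, lipschitzWith_averagedMap (nnnorm_pos.mp hnorm) hT⟩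
  rwa [nnnorm_inv, inv_mul_lt_one₀ hnorm]

theorem krasnoselskii_is_picard_of_averaged_general
    {𝕜 X : Type*} [NormedField 𝕜] [NormedAddCommGroup X] [NormedSpace 𝕜 X] [CompleteSpace X]
    (b : 𝕜) (K : ℝ≥0) (hK : K < ‖b + 1‖₊) (T : X → X)
    (hT : ∀ x y : X, ‖b • (x - y) + (T x - T y)‖ ≤ K * ‖x - y‖)
    (lam : 𝕜) (hlam : lam = 1 / (b + 1))
    (Tlam : X → X) (hTlam : ∀ x : X, Tlam x = (1 - lam) • x + lam • T x) :
    (∀ x : ℕ → X,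
      (∀ n : ℕ, x (n + 1) = (1 - lam) • x n + lam • T (x n)) ↔
      (∀ n : ℕ, x (n + 1) = Tlam (x n))) ∧
    ∃ xstar : X, Tlam xstar = xstar ∧ (∀ y : X, Tlam y = y → y = xstar) ∧
      ∀ x : ℕ → X, (∀ n : ℕ, x (n + 1) = Tlam (x n)) →
        Tendsto x atTop (𝓝 xstar) := by
  obtain rfl : Tlam = averagedMap lam T := funext hTlam
  have hcontr : ContractingWith (‖(b + 1)⁻¹‖₊ * K) (averagedMap lam T) := by
    rw [hlam, one_div]
    exact contractingWith_averagedMap hK (lipschitzWith_smul_add_iff.mpr hT)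
  exact ⟨fun _ => Iff.rfl, hcontr.fixedPoint, hcontr.fixedPoint_isFixedPt,
    fun _ hy => hcontr.fixedPoint_unique hy, fun _ hx => tendsto_fixedPoint_of_succ_eq hcontr hx⟩

/-- For a `b`-modified enriched nonexpansive mapping `T` with `b > 0` on a real
Banach space and `λ = 1 / (b + 1)`: the Krasnoselskii iteration
`x_{n+1} = (1 - λ) • x_n + λ • T x_n` is exactly the Picard iteration of the
averaged mapping `T_λ x = (1 - λ) • x + λ • T x`, and `T_λ` has a unique fixed
point to which the Picard iteration converges for every initial point. -/
theorem krasnoselskii_is_picard_of_averaged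
    {X : Type*} [NormedAddCommGroup X] [NormedSpace ℝ X] [CompleteSpace X]
    (b : ℝ) (hb : 0 < b) (T : X → X)
    (hT : ∀ x y : X, ‖b • (x - y) + (T x - T y)‖ ≤ ‖x - y‖)
    (lam : ℝ) (hlam : lam = 1 / (b + 1))
    (Tlam : X → X) (hTlam : ∀ x : X, Tlam x = (1 - lam) • x + lam • T x) :
    (∀ x : ℕ → X,
      (∀ n : ℕ, x (n + 1) = (1 - lam) • x n + lam • T (x n)) ↔
      (∀ n : ℕ, x (n + 1) = Tlam (x n))) ∧
    ∃ xstar : X, Tlam xstar = xstar ∧ (∀ y : X, Tlam y = y → y = xstar) ∧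
      ∀ x : ℕ → X, (∀ n : ℕ, x (n + 1) = Tlam (x n)) →
        Filter.Tendsto x Filter.atTop (nhds xstar) := by
  have hnorm : 1 < ‖b + 1‖₊ := (lt_add_of_pos_left 1 hb).trans_le (Real.le_norm_self _)
  exact krasnoselskii_is_picard_of_averaged_general b 1 hnorm T (by simpa using hT) lam hlam
    Tlam hTlam
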